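/- (Surjectivity up to denominators in the magic of potions.) With A, f = {a_i}_{i∈I}, g = {b_j}_{j∈J}, the relevance and divisor-closedness hypotheses on f, the chosen data n_j, ν_j⁺, ν_j⁻ and elements z_j ∈ A_{(f)} as in the magic of potions, and the canonical ring homomorphism χ : A_{(f)} → A_{(f∪g)}: for every w ∈ A_{(f∪g)} there exist z ∈ A_{(f)} and a finitely supported k : J → ℕ such that w · χ(∏_j z_j^{k_j}) = χ(z). -/

import Mathlib

/-!
Statement 7 (Surjectivity up to denominators in the magic of potions): with the data
of the magic of potions (`f` relevant and divisor-closed, elements `z j ∈ A_{(f)}`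
with value `(b_j ^ n_j * ∏ᵢ aᵢ ^ ν_j⁻ i) / (∏ᵢ aᵢ ^ ν_j⁺ i)`), every
`w ∈ A_{(f∪g)}` satisfies `w * χ (∏ⱼ z_j ^ k_j) = χ z` for some `z ∈ A_{(f)}` and
some finitely supported `k : J → ℕ`.
-/

/-- The set of degrees of homogeneous divisors of members of the family `f`. -/
def divisorDegrees {M A I : Type*} [AddCommGroup M] [CommRing A]
    (𝒜 : M → Submodule ℤ A) (f : I → A) : Set M :=
  {m | ∃ x : A, x ≠ 0 ∧ x ∈ 𝒜 m ∧ ∃ i, x ∣ f i}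

/-- A family `f` of homogeneous elements of an `M`-graded ring is *relevant* if every
`x ∈ M` has a positive multiple lying in the subgroup of `M` generated by the degrees
of the homogeneous divisors of members of `f`. -/
def IsRelevant {M A I : Type*} [AddCommGroup M] [CommRing A]
    (𝒜 : M → Submodule ℤ A) (f : I → A) : Prop :=
  ∀ x : M, ∃ n : ℕ, 0 < n ∧ n • x ∈ AddSubgroup.closure (divisorDegrees 𝒜 f)

/-- A product of powers of members of a family `f` belongs to the multiplicative
submonoid generated by `f`. -/
theorem prodPow_mem_closure {A I : Type*} [CommRing A] (f : I → A) (θ : I →₀ ℕ) :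
    (∏ i ∈ θ.support, f i ^ θ i) ∈ Submonoid.closure (Set.range f) :=
  Submonoid.prod_mem _ fun i _ =>
    Submonoid.pow_mem _ (Submonoid.subset_closure (Set.mem_range_self i)) _

/-- The canonical ring homomorphism between localizations of the same ring at two
nested submonoids `S ≤ T`. -/
noncomputable def locMap {A : Type*} [CommRing A] {S T : Submonoid A} (h : S ≤ T) :
    Localization S →+* Localization T :=
  IsLocalization.map (Localization T) (RingHom.id A)
    (show S ≤ Submonoid.comap (RingHom.id A) T from h)

/-!
A fraction `a / t` of `A_{(T)}` can be pulled back to `A_{(S)}` once its denominator `t` divides the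
numerator of a homogeneous fraction `p = t * c / s` over `S`: then `(a / t) * p = a * c / s`. The
`t` for which such a `p` can be found in a given submonoid `P` of `A_{(S)}` themselves form a
submonoid of `A`, so for `T` generated by `f ∪ g` and `P` by the `z j` only generators matter. Each
`f i` divides the numerator of `1 = f i / f i`, and each `g j` divides the numerator of `z j`
because `n j` is positive.
-/

theorem locMap_mk {A : Type*} [CommRing A] {S T : Submonoid A} (h : S ≤ T) (a : A) (s : S) :
    locMap h (Localization.mk a s) = Localization.mk a ⟨s, h s.2⟩ := by
  simp only [locMap, Localization.mk_eq_mk', IsLocalization.map_mk', RingHom.id_apply]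

section

open HomogeneousLocalization

variable {M A σ : Type*} [AddCommMonoid M] [DecidableEq M] [CommRing A] [SetLike σ A]
  [AddSubgroupClass σ A] {𝒜 : M → σ} [GradedRing 𝒜] {S T : Submonoid A}

theorem val_mapId (h : S ≤ T) (w : HomogeneousLocalization 𝒜 S) :
    (mapId 𝒜 h w).val = locMap h w.val := by
  obtain ⟨q, rfl⟩ := mk_surjective w
  rw [val_mk, locMap_mk]
  rfl

theorem eq_mapId_of_val_eq_locMap (h : S ≤ T)
    {χ : HomogeneousLocalization 𝒜 S →+* HomogeneousLocalization 𝒜 T}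
    (hχ : ∀ w, (χ w).val = locMap h w.val) : χ = mapId 𝒜 h :=
  RingHom.ext fun w => val_injective T <| (hχ w).trans (val_mapId h w).symm

/-- The homogeneous elements of `A` that divide the numerator of some member of `P`, with
homogeneous cofactor. These are the denominators that multiplication by a member of `P` clears.
Since numerators are not well defined, it is enough that `t * c / s` represents an element of `P`
for some `s ∈ S` of the same degree as `t * c`. -/
def numeratorDivisors (P : Submonoid (HomogeneousLocalization 𝒜 S)) : Submonoid A where
  carrier := {t | ∃ δ ε : M, ∃ c ∈ 𝒜 ε, ∃ s : S, t ∈ 𝒜 δ ∧ (s : A) ∈ 𝒜 (δ + ε) ∧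
    ∃ p ∈ P, p.val = Localization.mk (t * c) s}
  one_mem' := ⟨0, 0, 1, SetLike.one_mem_graded 𝒜, 1, SetLike.one_mem_graded 𝒜,
    by simpa only [add_zero, OneMemClass.coe_one] using SetLike.one_mem_graded 𝒜, 1, P.one_mem,
    by rw [val_one, mul_one, Localization.mk_one]⟩
  mul_mem' := by
    rintro t t' ⟨δ, ε, c, hc, s, ht, hs, p, hp, hpv⟩ ⟨δ', ε', c', hc', s', ht', hs', p', hp', hpv'⟩
    refine ⟨δ + δ', ε + ε', c * c', SetLike.mul_mem_graded hc hc', s * s',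
      SetLike.mul_mem_graded ht ht', ?_, p * p', P.mul_mem hp hp', ?_⟩
    · exact add_add_add_comm δ ε δ' ε' ▸ SetLike.mul_mem_graded hs hs'
    · rw [val_mul, hpv, hpv', Localization.mk_mul, mul_mul_mul_comm]

variable {P : Submonoid (HomogeneousLocalization 𝒜 S)}

theorem mem_numeratorDivisors_of_mem {t : A} {δ : M} (ht : t ∈ 𝒜 δ) (htS : t ∈ S) :
    t ∈ numeratorDivisors P :=
  ⟨δ, 0, 1, SetLike.one_mem_graded 𝒜, ⟨t, htS⟩, ht, by simpa only [add_zero] using ht,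
    1, P.one_mem, by rw [val_one, mul_one, Localization.mk_self_mk]⟩

theorem mem_numeratorDivisors_of_val_eq_mk_pow_mul {t c : A} {δ ε : M} {n : ℕ} (hn : 0 < n)
    (ht : t ∈ 𝒜 δ) (hc : c ∈ 𝒜 ε) {s : S} (hs : (s : A) ∈ 𝒜 (n • δ + ε))
    {p : HomogeneousLocalization 𝒜 S} (hp : p ∈ P) (hpv : p.val = Localization.mk (t ^ n * c) s) :
    t ∈ numeratorDivisors P := by
  obtain ⟨n, rfl⟩ := Nat.exists_eq_add_one.mpr hn
  refine ⟨δ, n • δ + ε, t ^ n * c, SetLike.mul_mem_graded (SetLike.pow_mem_graded n ht) hc, s, ht,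
    ?_, p, hp, ?_⟩
  · rwa [← add_assoc, ← succ_nsmul']
  · rw [hpv, pow_succ', mul_assoc]

theorem exists_mul_mapId_eq_mapId (hST : S ≤ T) (hT : T ≤ numeratorDivisors P)
    (w : HomogeneousLocalization 𝒜 T) : ∃ p ∈ P, ∃ y, w * mapId 𝒜 hST p = mapId 𝒜 hST y := by
  by_cases h0 : (0 : A) ∈ T
  · have := HomogeneousLocalization.subsingleton 𝒜 h0
    exact ⟨1, P.one_mem, 0, Subsingleton.elim _ _⟩
  obtain ⟨⟨m, ⟨a, ha⟩, ⟨t, htm⟩, htT⟩, rfl⟩ := mk_surjective w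
  obtain ⟨δ, ε, c, hc, s, htδ, hs, p, hp, hpv⟩ := hT htT
  have ht0 : t ≠ 0 := fun h => h0 (h ▸ htT)
  obtain rfl : m = δ := DirectSum.degree_eq_of_mem_mem 𝒜 htm htδ ht0
  let y : HomogeneousLocalization 𝒜 S :=
    .mk ⟨m + ε, ⟨a * c, SetLike.mul_mem_graded ha hc⟩, ⟨s, hs⟩, s.2⟩
  have cancel : Localization.mk a ⟨t, htT⟩ * Localization.mk (t * c) ⟨s, hST s.2⟩ =
      Localization.mk (a * c) (⟨s, hST s.2⟩ : T) := by
    rw [Localization.mk_mul, mul_left_comm, ← Localization.mk_mul, Localization.mk_self_mk, one_mul]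
  refine ⟨p, hp, y, val_injective T ?_⟩
  simpa only [val_mul, val_mapId, hpv, y, val_mk, locMap_mk] using cancel

end

theorem magic_of_potions_surjectivity_general
    {M A I J σ : Type*} [AddCommMonoid M] [DecidableEq M] [CommRing A] [SetLike σ A]
    [AddSubgroupClass σ A] (𝒜 : M → σ) [GradedRing 𝒜]
    (f : I → A) (d : I → M) (g : J → A) (e : J → M)
    (hfd : ∀ i, f i ∈ 𝒜 (d i)) (hge : ∀ j, g j ∈ 𝒜 (e j))
    (χ : HomogeneousLocalization 𝒜 (Submonoid.closure (Set.range f)) →+*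
        HomogeneousLocalization 𝒜 (Submonoid.closure (Set.range f ∪ Set.range g)))
    (hχ : ∀ w, (χ w).val =
      locMap (Submonoid.closure_mono Set.subset_union_left) w.val)
    (n : J → ℕ) (hn : ∀ j, 0 < n j) (νp νm : J → I →₀ ℕ)
    (hdeg : ∀ j, n j • e j + ((νm j).sum fun i c => c • d i)
      = (νp j).sum fun i c => c • d i)
    (z : J → HomogeneousLocalization 𝒜 (Submonoid.closure (Set.range f)))
    (hz : ∀ j, (z j).val =
      Localization.mk (g j ^ n j * ∏ i ∈ (νm j).support, f i ^ (νm j) i)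
        ⟨∏ i ∈ (νp j).support, f i ^ (νp j) i, prodPow_mem_closure f (νp j)⟩)
    (w : HomogeneousLocalization 𝒜 (Submonoid.closure (Set.range f ∪ Set.range g))) :
    ∃ (y : HomogeneousLocalization 𝒜 (Submonoid.closure (Set.range f)))
      (k : J →₀ ℕ), w * χ (∏ j ∈ k.support, z j ^ k j) = χ y := by
  obtain rfl := eq_mapId_of_val_eq_locMap _ hχ
  have prod_mem (θ : I →₀ ℕ) : ∏ i ∈ θ.support, f i ^ θ i ∈ 𝒜 (θ.sum fun i c => c • d i) :=
    SetLike.prod_pow_mem_graded 𝒜 d f θ fun i _ => hfd i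
  have hf (i : I) : f i ∈ numeratorDivisors (Submonoid.closure (Set.range z)) :=
    mem_numeratorDivisors_of_mem (hfd i) (Submonoid.subset_closure ⟨i, rfl⟩)
  have hg (j : J) : g j ∈ numeratorDivisors (Submonoid.closure (Set.range z)) :=
    mem_numeratorDivisors_of_val_eq_mk_pow_mul (hn j) (hge j) (prod_mem (νm j))
      (hdeg j ▸ prod_mem (νp j)) (Submonoid.subset_closure ⟨j, rfl⟩) (hz j)
  obtain ⟨p, hp, y, hy⟩ := exists_mul_mapId_eq_mapId
    (Submonoid.closure_mono Set.subset_union_left) (Submonoid.closure_le.mpr <|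
      Set.union_subset (Set.range_subset_iff.mpr hf) (Set.range_subset_iff.mpr hg)) w
  obtain ⟨k, rfl⟩ := Submonoid.exists_finsupp_of_mem_closure_range z p hp
  exact ⟨y, k, hy⟩

theorem magic_of_potions_surjectivity
    {M A I J : Type*} [AddCommGroup M] [DecidableEq M] [CommRing A]
    (𝒜 : M → Submodule ℤ A) [GradedRing 𝒜]
    (f : I → A) (d : I → M) (g : J → A) (e : J → M)
    (hf0 : ∀ i, f i ≠ 0) (hfd : ∀ i, f i ∈ 𝒜 (d i))
    (hg0 : ∀ j, g j ≠ 0) (hge : ∀ j, g j ∈ 𝒜 (e j))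
    (hrel : IsRelevant 𝒜 f)
    (hdivclosed : {x : A | x ≠ 0 ∧ (∃ m, x ∈ 𝒜 m) ∧ ∃ i, x ∣ f i} = Set.range f)
    (χ : HomogeneousLocalization 𝒜 (Submonoid.closure (Set.range f)) →+*
        HomogeneousLocalization 𝒜 (Submonoid.closure (Set.range f ∪ Set.range g)))
    (hχ : ∀ w, (χ w).val =
      locMap (Submonoid.closure_mono Set.subset_union_left) w.val)
    (n : J → ℕ) (hn : ∀ j, 0 < n j) (νp νm : J → I →₀ ℕ)
    (hdeg : ∀ j, n j • e j + ((νm j).sum fun i c => c • d i)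
      = (νp j).sum fun i c => c • d i)
    (z : J → HomogeneousLocalization 𝒜 (Submonoid.closure (Set.range f)))
    (hz : ∀ j, (z j).val =
      Localization.mk (g j ^ n j * ∏ i ∈ (νm j).support, f i ^ (νm j) i)
        ⟨∏ i ∈ (νp j).support, f i ^ (νp j) i, prodPow_mem_closure f (νp j)⟩) :
    ∀ w : HomogeneousLocalization 𝒜 (Submonoid.closure (Set.range f ∪ Set.range g)),
      ∃ (y : HomogeneousLocalization 𝒜 (Submonoid.closure (Set.range f)))
        (k : J →₀ ℕ), w * χ (∏ j ∈ k.support, z j ^ k j) = χ y :=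
  magic_of_potions_surjectivity_general 𝒜 f d g e hfd hge χ hχ n hn νp νm hdeg z hz
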